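/- arXiv:1605.06010 — 3 statements merged into one kernel-verified Lean document; each statement's English description precedes it below -/
import Mathlib

section
/- Let (X, T) be a dynamical system. If the induced hyperspace system (K(X), T_K) is mildly mixing, then for every λ ∈ (0,1] the Zadeh extension system (𝔽^{=λ}(X), T_F|_{𝔽^{=λ}(X)}) with the levelwise metric d_∞ is mildly mixing. -/
open Metric Set TopologicalSpace Filter Function
open scoped Classical

variable {X Y : Type*}

/-- Extended Hausdorff metric on subsets of `X`: the usual Hausdorff distance between
two nonempty sets (or two empty sets), and `diam X` when exactly one of them is empty. -/
noncomputable def eHd (X : Type*) [MetricSpace X] (A B : Set X) : ℝ :=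
  if (A.Nonempty ∧ B.Nonempty) ∨ (A = ∅ ∧ B = ∅) then Metric.hausdorffDist A B
  else Metric.diam (Set.univ : Set X)

/-- The `α`-cut of a fuzzy set. -/
def cut (A : X → ℝ) (α : ℝ) : Set X := {x | α ≤ A x}

/-- The levelwise metric `d_∞` on fuzzy sets. -/
noncomputable def dinf [MetricSpace X] (A B : X → ℝ) : ℝ :=
  sSup {r : ℝ | ∃ α ∈ Set.Ioc (0:ℝ) 1, r = eHd X (cut A α) (cut B α)}

/-- A fuzzy set: an upper semicontinuous function into `[0,1]`. -/
def IsFuzzy [TopologicalSpace X] (A : X → ℝ) : Prop :=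
  (∀ x, A x ∈ Set.Icc (0:ℝ) 1) ∧ UpperSemicontinuous A

/-- `𝔽₀(X)`: nonempty (not identically zero) u.s.c. fuzzy sets. -/
def F0 (X : Type*) [TopologicalSpace X] : Set (X → ℝ) :=
  {A | IsFuzzy A ∧ ∃ x, A x ≠ 0}

/-- `𝔽^{=λ}(X)`: u.s.c. fuzzy sets with maximum value `λ`. -/
def Feq (X : Type*) [TopologicalSpace X] (lam : ℝ) : Set (X → ℝ) :=
  {A | IsFuzzy A ∧ (∃ x, A x = lam) ∧ ∀ x, A x ≤ lam}

/-- `𝔽^{≥λ}(X)`: u.s.c. fuzzy sets attaining a value `≥ λ`. -/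
def Fge (X : Type*) [TopologicalSpace X] (lam : ℝ) : Set (X → ℝ) :=
  {A | IsFuzzy A ∧ ∃ x, lam ≤ A x}

/-- Zadeh's extension of `T`. -/
noncomputable def zadeh (T : X → X) (A : X → ℝ) : X → ℝ :=
  fun x => sSup (A '' (T ⁻¹' {x}))

/-- The induced map `T_K` on the hyperspace of nonempty closed (= compact) subsets. -/
def hyper [TopologicalSpace X] (T : X → X) (hT : Continuous T)
    (A : NonemptyCompacts X) : NonemptyCompacts X :=
  ⟨⟨T '' A, A.isCompact.image hT⟩, A.nonempty.image T⟩

/-- Topological transitivity. -/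
def TopTrans [TopologicalSpace Y] (S : Y → Y) : Prop :=
  ∀ U V : Set Y, IsOpen U → IsOpen V → U.Nonempty → V.Nonempty →
    ∃ n : ℕ, (S^[n] '' U ∩ V).Nonempty

/-- Weak mixing: `S × S` is transitive. -/
def TopWeakMix [TopologicalSpace Y] (S : Y → Y) : Prop :=
  TopTrans (fun p : Y × Y => (S p.1, S p.2))

/-- Topological transitivity of `S` restricted to `C`, for the topology induced by the
(pseudo)metric `ρ`, phrased via metric balls. -/
def TransOn (ρ : Y → Y → ℝ) (S : Y → Y) (C : Set Y) : Prop :=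
  ∀ A ∈ C, ∀ B ∈ C, ∀ ε > 0, ∃ n : ℕ, ∃ E ∈ C, ρ E A < ε ∧ ρ (S^[n] E) B < ε

/-- Weak mixing of `S` restricted to `C`, phrased via metric balls. -/
def WeakMixOn (ρ : Y → Y → ℝ) (S : Y → Y) (C : Set Y) : Prop :=
  ∀ A₁ ∈ C, ∀ A₂ ∈ C, ∀ B₁ ∈ C, ∀ B₂ ∈ C, ∀ ε > 0, ∃ n : ℕ,
    ∃ E₁ ∈ C, ∃ E₂ ∈ C, ρ E₁ A₁ < ε ∧ ρ E₂ A₂ < ε ∧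
      ρ (S^[n] E₁) B₁ < ε ∧ ρ (S^[n] E₂) B₂ < ε


/-- Mild mixing on a topological space: `S` is weakly disjoint with every transitive
dynamical system (a compact metric space with at least two points together with a
continuous surjection). -/
def MildMixTop [TopologicalSpace Y] (S : Y → Y) : Prop :=
  ∀ (Z : Type) [MetricSpace Z] [CompactSpace Z] [Nontrivial Z] (R : Z → Z),
    Continuous R → Function.Surjective R → TopTrans R →
      TopTrans (fun p : Y × Z => (S p.1, R p.2))

/-- Mild mixing of `S` restricted to `C` (with the metric `ρ`): the product of the
subsystem with every transitive dynamical system is transitive, phrased via balls. -/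
def MildMixOn (ρ : Y → Y → ℝ) (S : Y → Y) (C : Set Y) : Prop :=
  ∀ (Z : Type) [MetricSpace Z] [CompactSpace Z] [Nontrivial Z] (R : Z → Z),
    Continuous R → Function.Surjective R → TopTrans R →
      ∀ A ∈ C, ∀ B ∈ C, ∀ z₁ z₂ : Z, ∀ ε > 0, ∃ n : ℕ, ∃ E ∈ C, ∃ w : Z,
        ρ E A < ε ∧ dist w z₁ < ε ∧ ρ (S^[n] E) B < ε ∧ dist (R^[n] w) z₂ < ε

lemma hyper_iter {X : Type*} [TopologicalSpace X] (T : X → X) (hT : Continuous T) (n : ℕ)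
    (K : NonemptyCompacts X) : (((hyper T hT)^[n] K : NonemptyCompacts X) : Set X) = T^[n] '' K := by
  induction n generalizing K with
  | zero => simp
  | succ n ih =>
    rw [Function.iterate_succ_apply, ih, Function.iterate_succ, Set.image_comp]
    rfl

lemma prod_iter {X Z : Type*} (T : X → X) (R : Z → Z) (n : ℕ) (p : X × Z) :
    (fun p : X × Z => (T p.1, R p.2))^[n] p = (T^[n] p.1, R^[n] p.2) := by
  induction n generalizing p with
  | zero => rfl
  | succ n ih => simp only [Function.iterate_succ_apply, ih]

lemma mm_base {X : Type*} [MetricSpace X]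
    (T : X → X) (hT : Continuous T) (hmm : MildMixTop (hyper T hT))
    (Z : Type) [MetricSpace Z] [CompactSpace Z] [Nontrivial Z] (R : Z → Z)
    (hR : Continuous R) (hRs : Function.Surjective R) (hRt : TopTrans R)
    (U V : Set X) (hU : IsOpen U) (hV : IsOpen V) (hUn : U.Nonempty) (hVn : V.Nonempty)
    (W₁ W₂ : Set Z) (hW₁ : IsOpen W₁) (hW₂ : IsOpen W₂) (hW₁n : W₁.Nonempty) (hW₂n : W₂.Nonempty) :
    ∃ n : ℕ, (∃ x ∈ U, T^[n] x ∈ V) ∧ ∃ w ∈ W₁, R^[n] w ∈ W₂ := by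
  obtain ⟨u, hu⟩ := hUn
  obtain ⟨v, hv⟩ := hVn
  obtain ⟨w1, hw1⟩ := hW₁n
  obtain ⟨w2, hw2⟩ := hW₂n
  obtain ⟨n, q, ⟨⟨K, w⟩, ⟨hK, hw⟩, rfl⟩, hq1, hq2⟩ := hmm Z R hR hRs hRt
    ({K : NonemptyCompacts X | (K : Set X) ⊆ U} ×ˢ W₁)
    ({K : NonemptyCompacts X | (K : Set X) ⊆ V} ×ˢ W₂)
    ((NonemptyCompacts.isOpen_subsets_of_isOpen hU).prod hW₁)
    ((NonemptyCompacts.isOpen_subsets_of_isOpen hV).prod hW₂)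
    ⟨({u}, w1), by simpa using hu, hw1⟩ ⟨({v}, w2), by simpa using hv, hw2⟩
  rw [prod_iter] at hq1 hq2
  obtain ⟨x, hx⟩ := K.nonempty
  refine ⟨n, ⟨x, hK hx, ?_⟩, w, hw, hq2⟩
  apply hq1
  change _ ∈ (((hyper T hT)^[n] K : NonemptyCompacts X) : Set X)
  rw [hyper_iter]
  exact ⟨x, hx, rfl⟩

lemma conj_iter {X X' : Type*} (e : X ≃ X') (T : X → X) (n : ℕ) (y : X') :
    (fun y => e (T (e.symm y)))^[n] y = e (T^[n] (e.symm y)) := by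
  induction n generalizing y with
  | zero => simp
  | succ n ih => simp [Function.iterate_succ_apply, ih]

lemma mm_fin {X : Type*} [MetricSpace X] [CompactSpace X] [Nontrivial X]
    (T : X → X) (hT : Continuous T) (hTs : Function.Surjective T)
    (hmm : MildMixTop (hyper T hT)) {ι : Type*} (U V : ι → Set X)
    (hU : ∀ i, IsOpen (U i)) (hV : ∀ i, IsOpen (V i)) (hUn : ∀ i, (U i).Nonempty)
    (hVn : ∀ i, (V i).Nonempty) (s : Finset ι) :
    ∀ (Z : Type) [MetricSpace Z] [CompactSpace Z] [Nontrivial Z] (R : Z → Z),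
    Continuous R → Function.Surjective R → TopTrans R →
    ∀ W₁ W₂ : Set Z, IsOpen W₁ → IsOpen W₂ → W₁.Nonempty → W₂.Nonempty →
    ∃ n : ℕ, (∀ i ∈ s, ∃ x ∈ U i, T^[n] x ∈ V i) ∧ ∃ w ∈ W₁, R^[n] w ∈ W₂ := by
  let X' : Type := range (kuratowskiEmbedding X)
  let e : X ≃ᵢ X' := (kuratowskiEmbedding.isometry X).isometryEquivOnRange
  haveI : CompactSpace X' := e.toHomeomorph.compactSpace
  let T' : X' → X' := fun y => e (T (e.symm y))
  have hT' : Continuous T' := e.continuous.comp (hT.comp e.symm.continuous)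
  have hTs' : Function.Surjective T' := e.surjective.comp (hTs.comp e.symm.surjective)
  have hit : ∀ n y, T'^[n] y = e (T^[n] (e.symm y)) := conj_iter e.toEquiv T
  induction s using Finset.induction_on with
  | empty =>
    intro Z _ _ _ R hR hRs hRt W₁ W₂ h1 h2 h3 h4
    obtain ⟨n, _, ⟨w, hw, rfl⟩, hw'⟩ := hRt W₁ W₂ h1 h2 h3 h4
    exact ⟨n, by simp, w, hw, hw'⟩
  | insert a s ha ih =>
    intro Z _ _ _ R hR hRs hRt W₁ W₂ h1 h2 h3 h4
    have htr : TopTrans (fun p : X' × Z => (T' p.1, R p.2)) := by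
      intro P Q hP hQ ⟨⟨p1, p2⟩, hp⟩ ⟨⟨q1, q2⟩, hq⟩
      obtain ⟨A, B, hA, hB, hpA, hpB, hAB⟩ := isOpen_prod_iff.1 hP p1 p2 hp
      obtain ⟨C, D, hC, hD, hqC, hqD, hCD⟩ := isOpen_prod_iff.1 hQ q1 q2 hq
      obtain ⟨n, ⟨x, hx, hx'⟩, w, hw, hw'⟩ := mm_base T hT hmm Z R hR hRs hRt
        (e ⁻¹' A) (e ⁻¹' C) (hA.preimage e.continuous) (hC.preimage e.continuous)
        ⟨e.symm p1, by simpa using hpA⟩ ⟨e.symm q1, by simpa using hqC⟩ B D hB hD ⟨_, hpB⟩ ⟨_, hqD⟩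
      refine ⟨n, _, ⟨(e x, w), hAB ⟨hx, hw⟩, rfl⟩, ?_⟩
      rw [prod_iter]
      apply hCD
      refine ⟨?_, hw'⟩
      change T'^[n] (e x) ∈ C
      rw [hit]
      simpa using hx'
    obtain ⟨n, hn, ⟨y, w⟩, ⟨hy, hw⟩, hyw⟩ := ih (X' × Z) (fun p : X' × Z => (T' p.1, R p.2))
      (by fun_prop) (hTs'.prodMap hRs) htr
      ((e.symm ⁻¹' (U a)) ×ˢ W₁) ((e.symm ⁻¹' (V a)) ×ˢ W₂)
      (((hU a).preimage e.symm.continuous).prod h1) (((hV a).preimage e.symm.continuous).prod h2)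
      (((hUn a).preimage e.symm.surjective).prod h3) (((hVn a).preimage e.symm.surjective).prod h4)
    rw [prod_iter] at hyw
    refine ⟨n, ?_, w, hw, hyw.2⟩
    intro i hi
    rcases Finset.mem_insert.1 hi with rfl | hi
    · refine ⟨e.symm y, hy, ?_⟩
      have := hyw.1
      simp only [hit] at this
      simpa using this
    · exact hn i hi

/-- pushforward of a function -/
noncomputable def push {I X : Type*} (f : I → X) (c : I → ℝ) : X → ℝ :=
  fun x => sSup (c '' (f ⁻¹' {x}))

lemma push_cases {I X : Type*} (f : I → X) (c : I → ℝ) (hc : (range c).Finite) (x : X) :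
    ((∀ i, f i ≠ x) ∧ push f c x = 0) ∨
      ∃ i, f i = x ∧ push f c x = c i ∧ ∀ j, f j = x → c j ≤ c i := by
  by_cases h : ∃ i, f i = x
  · right
    have hf : (c '' (f ⁻¹' {x})).Finite := hc.subset (image_subset_range _ _)
    obtain ⟨i, hi⟩ := h
    have hne : (c '' (f ⁻¹' {x})).Nonempty := ⟨c i, i, hi, rfl⟩
    obtain ⟨j, hj, hj'⟩ := hne.csSup_mem hf
    refine ⟨j, hj, hj'.symm, fun k hk => ?_⟩
    rw [hj']
    exact le_csSup hf.bddAbove ⟨k, hk, rfl⟩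
  · left
    push Not at h
    refine ⟨h, ?_⟩
    have : f ⁻¹' {x} = ∅ := by
      ext i; simpa using h i
    simp [push, this]

lemma cut_push {I X : Type*} (f : I → X) (c : I → ℝ) (hc : (range c).Finite) {α : ℝ}
    (hα : 0 < α) : cut (push f c) α = f '' cut c α := by
  ext x
  simp only [cut, mem_setOf_eq, mem_image]
  rcases push_cases f c hc x with ⟨h, h0⟩ | ⟨i, hi, h0, hm⟩
  · rw [h0]
    constructor
    · intro h; linarith
    · rintro ⟨i, _, hi⟩; exact absurd hi (h i)
  · rw [h0]
    constructor
    · intro h; exact ⟨i, h, hi⟩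
    · rintro ⟨j, hj, hj'⟩; exact hj.trans (hm j hj')

lemma range_push {I X : Type*} (f : I → X) (c : I → ℝ) (hc : (range c).Finite) :
    (range (push f c)).Finite := by
  apply (hc.insert 0).subset
  rintro _ ⟨x, rfl⟩
  rcases push_cases f c hc x with ⟨h, h0⟩ | ⟨i, hi, h0, hm⟩
  · simp [h0]
  · right; exact ⟨i, h0.symm⟩

lemma cut_iter {X : Type*} (T : X → X) (n : ℕ) (E : X → ℝ) (hE : (range E).Finite) {α : ℝ}
    (hα : 0 < α) : cut ((zadeh T)^[n] E) α = T^[n] '' cut E α := by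
  induction n generalizing E with
  | zero => simp
  | succ n ih =>
    rw [Function.iterate_succ_apply, ih (zadeh T E) (range_push T E hE), Function.iterate_succ,
      Set.image_comp]
    congr 1
    exact cut_push T E hE hα

lemma dinf_le {X : Type*} [MetricSpace X] (G A : X → ℝ) {r : ℝ} (hr : 0 ≤ r)
    (h1 : ∀ α ∈ Set.Ioc (0:ℝ) 1, ∀ x ∈ cut G α, ∃ y ∈ cut A α, dist x y ≤ r)
    (h2 : ∀ α ∈ Set.Ioc (0:ℝ) 1, ∀ x ∈ cut A α, ∃ y ∈ cut G α, dist x y ≤ r) :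
    dinf G A ≤ r := by
  apply Real.sSup_le _ hr
  rintro _ ⟨α, hα, rfl⟩
  rw [eHd, if_pos]
  · exact hausdorffDist_le_of_mem_dist hr (h1 α hα) (h2 α hα)
  · rcases (cut G α).eq_empty_or_nonempty with h | ⟨x, hx⟩
    · right
      refine ⟨h, eq_empty_iff_forall_notMem.2 fun y hy => ?_⟩
      obtain ⟨z, hz, _⟩ := h2 α hα y hy
      simp [h] at hz
    · left
      obtain ⟨y, hy, _⟩ := h1 α hα x hx
      exact ⟨⟨x, hx⟩, ⟨y, hy⟩⟩

lemma net_max {X : Type*} [MetricSpace X] [CompactSpace X] (A : X → ℝ) (hA : UpperSemicontinuous A)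
    {δ : ℝ} (hδ : 0 < δ) (x : X) : ∃ y, dist y x ≤ δ ∧ ∀ z, dist z x ≤ δ → A z ≤ A y := by
  obtain ⟨y, hy, hm⟩ := UpperSemicontinuousOn.exists_isMaxOn (s := closedBall x δ) (f := A)
    ⟨x, mem_closedBall_self hδ.le⟩ isClosed_closedBall.isCompact (hA.upperSemicontinuousOn _)
  exact ⟨y, hy, fun z hz => hm hz⟩

/-- If `(K(X), T_K)` is mildly mixing, then the Zadeh extension restricted to each
`𝔽^{=λ}(X)` is mildly mixing. -/
theorem zadeh_mildMixing_of_hyper_mildMixing {X : Type*} [MetricSpace X] [CompactSpace X] [Nontrivial X]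
    (T : X → X) (hT : Continuous T) (hTs : Function.Surjective T)
    (hmm : MildMixTop (hyper T hT)) :
    ∀ lam ∈ Set.Ioc (0:ℝ) 1, MildMixOn dinf (zadeh T) (Feq X lam) := by
  intro lam hlam Z _ _ _ R hR hRs hRt A hA B hB z₁ z₂ ε hε
  obtain ⟨⟨hA01, hAu⟩, ⟨xA, hxA⟩, hAle⟩ := hA
  obtain ⟨⟨hB01, hBu⟩, ⟨xB, hxB⟩, hBle⟩ := hB
  obtain ⟨δ, hδ, hδε⟩ : ∃ δ > 0, δ + δ < ε := ⟨ε / 4, by linarith, by linarith⟩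
  obtain ⟨t, -, htf, hcov⟩ := finite_cover_balls_of_compact (isCompact_univ (X := X)) hδ
  have hnet : ∀ x : X, ∃ i : t, dist x i ≤ δ := by
    intro x
    have := hcov (mem_univ x)
    simp only [mem_iUnion, mem_ball] at this
    obtain ⟨i, hi, h⟩ := this
    exact ⟨⟨i, hi⟩, h.le⟩
  haveI : Fintype t := htf.fintype
  choose yA hyA hmA using fun i : t => net_max A hAu hδ (i : X)
  choose yB hyB hmB using fun i : t => net_max B hBu hδ (i : X)
  obtain ⟨n, hn, w, hw, hw'⟩ := mm_fin T hT hTs hmm (ι := t × t)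
    (fun p => ball (p.1 : X) δ) (fun p => ball (p.2 : X) δ) (fun _ => isOpen_ball)
    (fun _ => isOpen_ball) (fun p => ⟨p.1, mem_ball_self hδ⟩) (fun p => ⟨p.2, mem_ball_self hδ⟩)
    Finset.univ Z R hR hRs hRt (ball z₁ ε) (ball z₂ ε) isOpen_ball isOpen_ball
    ⟨z₁, mem_ball_self hε⟩ ⟨z₂, mem_ball_self hε⟩
  choose p hp hpT using fun i : t × t => hn i (Finset.mem_univ i)
  let c : t × t → ℝ := fun i => min (A (yA i.1)) (B (yB i.2))
  have hc : (range c).Finite := finite_range c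
  have hE := range_push p c hc
  have hcl : ∀ i, c i ≤ lam := fun i => (min_le_left _ _).trans (hAle _)
  have hc0 : ∀ i, 0 ≤ c i := fun i => le_min (hA01 _).1 (hB01 _).1
  have hEl : ∀ x, 0 ≤ push p c x ∧ push p c x ≤ lam := by
    intro x
    rcases push_cases p c hc x with ⟨h, h0⟩ | ⟨i, hi, h0, hm⟩
    · rw [h0]; exact ⟨le_rfl, hlam.1.le⟩
    · rw [h0]; exact ⟨hc0 i, hcl i⟩
  obtain ⟨iA, hiA⟩ := hnet xA
  obtain ⟨iB, hiB⟩ := hnet xB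
  have hlA : lam ≤ A (yA iA) := hxA ▸ hmA iA xA hiA
  have hlB : lam ≤ B (yB iB) := hxB ▸ hmB iB xB hiB
  refine ⟨n, push p c, ⟨⟨fun x => ⟨(hEl x).1, (hEl x).2.trans hlam.2⟩, ?_⟩, ?_, fun x => (hEl x).2⟩,
    w, ?_, hw, ?_, hw'⟩
  · rw [upperSemicontinuous_iff_isClosed_preimage]
    intro α
    rcases le_or_gt α 0 with hα | hα
    · convert isClosed_univ
      ext x
      simpa using hα.trans (hEl x).1
    · have : push p c ⁻¹' Ici α = p '' cut c α := cut_push p c hc hα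
      rw [this]
      exact (toFinite _).isClosed
  · have : p (iA, iB) ∈ cut (push p c) lam := by
      rw [cut_push p c hc hlam.1]
      exact ⟨_, le_min hlA hlB, rfl⟩
    exact ⟨_, le_antisymm (hEl _).2 this⟩
  · refine (dinf_le _ _ (by linarith) ?_ ?_).trans_lt hδε
    · intro α hα x hx
      rw [cut_push p c hc hα.1] at hx
      obtain ⟨i, hi, rfl⟩ := hx
      exact ⟨yA i.1, (show α ≤ A (yA i.1) from le_trans (show α ≤ c i from hi) (min_le_left _ _)),
        (dist_triangle_right _ _ (i.1 : X)).trans (add_le_add (mem_ball.1 (hp i)).le (hyA i.1))⟩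
    · intro α hα x hx
      obtain ⟨i, hi⟩ := hnet x
      have hαl : α ≤ lam := le_trans hx (hAle x)
      rw [cut_push p c hc hα.1]
      exact ⟨_, ⟨(i, iB), le_min (le_trans hx (hmA i x hi)) (hαl.trans hlB), rfl⟩,
        (dist_triangle_right _ _ (i : X)).trans (add_le_add hi (mem_ball.1 (hp (i, iB))).le)⟩
  · refine (dinf_le _ _ (by linarith) ?_ ?_).trans_lt hδε
    · intro α hα x hx
      rw [cut_iter T n _ hE hα.1, cut_push p c hc hα.1] at hx
      obtain ⟨_, ⟨i, hi, rfl⟩, rfl⟩ := hx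
      exact ⟨yB i.2, (show α ≤ B (yB i.2) from le_trans (show α ≤ c i from hi) (min_le_right _ _)),
        (dist_triangle_right _ _ (i.2 : X)).trans (add_le_add (mem_ball.1 (hpT i)).le (hyB i.2))⟩
    · intro α hα x hx
      obtain ⟨i, hi⟩ := hnet x
      have hαl : α ≤ lam := le_trans hx (hBle x)
      rw [cut_iter T n _ hE hα.1, cut_push p c hc hα.1]
      exact ⟨_, ⟨_, ⟨(iA, i), le_min (hαl.trans hlA) (le_trans hx (hmB i x hi)), rfl⟩, rfl⟩,
        (dist_triangle_right _ _ (i : X)).trans (add_le_add hi (mem_ball.1 (hpT (iA, i))).le)⟩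
end

section
/- Let (X, T) be a dynamical system. If the Zadeh extension system (𝔽₀(X), T_F) with the levelwise metric d_∞ is equicontinuous, then the induced hyperspace system (K(X), T_K) is equicontinuous. -/
open Metric Set TopologicalSpace Filter Function
open scoped Classical

variable {X Y : Type*}

/-- Equicontinuity of (the iterates of) a self-map of a metric space. -/
def EquicontM {Z : Type*} [PseudoMetricSpace Z] (S : Z → Z) : Prop :=
  ∀ ε > 0, ∃ δ > 0, ∀ y z : Z, dist y z < δ → ∀ n : ℕ, dist (S^[n] y) (S^[n] z) < ε

/-- Equicontinuity of `S` restricted to `C`, with respect to the metric `ρ`. -/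
def EquicontOn (ρ : Y → Y → ℝ) (S : Y → Y) (C : Set Y) : Prop :=
  ∀ ε > 0, ∃ δ > 0, ∀ A ∈ C, ∀ B ∈ C, ρ A B < δ → ∀ n : ℕ, ρ (S^[n] A) (S^[n] B) < ε

theorem aux_cut (A : Set X) {α : ℝ} (h : α ∈ Set.Ioc (0:ℝ) 1) :
    cut (A.indicator (fun _ => (1:ℝ))) α = A := by
  ext x
  simp only [cut, Set.mem_setOf_eq, Set.indicator_apply]
  split_ifs with hx
  · exact ⟨fun _ => hx, fun _ => h.2⟩
  · exact ⟨fun h' => absurd h' (not_le.2 h.1), fun h' => absurd h' hx⟩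

theorem aux_dinf [MetricSpace X] (A B : Set X) (hA : A.Nonempty) (hB : B.Nonempty) :
    dinf (A.indicator (fun _ => (1:ℝ))) (B.indicator (fun _ => (1:ℝ)))
      = Metric.hausdorffDist A B := by
  have : {r : ℝ | ∃ α ∈ Set.Ioc (0:ℝ) 1, r = eHd X (cut (A.indicator (fun _ => (1:ℝ))) α)
      (cut (B.indicator (fun _ => (1:ℝ))) α)} = {Metric.hausdorffDist A B} := by
    ext r
    simp only [Set.mem_setOf_eq, Set.mem_singleton_iff]
    constructor
    · rintro ⟨α, hα, rfl⟩
      rw [aux_cut A hα, aux_cut B hα, eHd, if_pos (Or.inl ⟨hA, hB⟩)]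
    · rintro rfl
      have hα : (1:ℝ) ∈ Set.Ioc (0:ℝ) 1 := by simp
      refine ⟨1, hα, ?_⟩
      rw [aux_cut A hα, aux_cut B hα, eHd, if_pos (Or.inl ⟨hA, hB⟩)]
  rw [dinf, this, csSup_singleton]

theorem aux_zadeh (T : X → X) (hTs : Function.Surjective T) (A : Set X) :
    zadeh T (A.indicator (fun _ => (1:ℝ))) = (T '' A).indicator (fun _ => (1:ℝ)) := by
  funext x
  have hle : ∀ r ∈ A.indicator (fun _ => (1:ℝ)) '' (T ⁻¹' {x}), r ≤ 1 := by
    rintro _ ⟨y, -, rfl⟩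
    rw [Set.indicator_apply]
    split_ifs <;> norm_num
  rw [zadeh]
  by_cases hx : x ∈ T '' A
  · rw [Set.indicator_of_mem hx]
    obtain ⟨y, hy, rfl⟩ := hx
    apply IsGreatest.csSup_eq
    exact ⟨⟨y, rfl, Set.indicator_of_mem hy _⟩, hle⟩
  · rw [Set.indicator_of_notMem hx]
    obtain ⟨y, hy⟩ := hTs x
    apply IsGreatest.csSup_eq
    refine ⟨⟨y, hy, Set.indicator_of_notMem (fun h => hx ⟨y, h, hy⟩) _⟩, ?_⟩
    rintro _ ⟨z, hz, rfl⟩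
    exact (Set.indicator_of_notMem (fun h => hx ⟨z, h, hz⟩) _).le

theorem aux_iter [TopologicalSpace X] (T : X → X) (hT : Continuous T)
    (hTs : Function.Surjective T) (A : NonemptyCompacts X) (n : ℕ) :
    (zadeh T)^[n] ((A : Set X).indicator (fun _ => (1:ℝ)))
      = (((hyper T hT)^[n] A : NonemptyCompacts X) : Set X).indicator (fun _ => (1:ℝ)) := by
  induction n with
  | zero => rfl
  | succ n ih =>
    rw [Function.iterate_succ_apply', Function.iterate_succ_apply', ih, aux_zadeh T hTs]
    rfl

theorem aux_F0 [MetricSpace X] (A : NonemptyCompacts X) :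
    (A : Set X).indicator (fun _ => (1:ℝ)) ∈ F0 X := by
  refine ⟨⟨fun x => ?_, ?_⟩, ?_⟩
  · rw [Set.indicator_apply]
    split_ifs <;> simp
  · exact A.isCompact.isClosed.upperSemicontinuous_indicator zero_le_one
  · obtain ⟨x, hx⟩ := A.nonempty
    exact ⟨x, by rw [Set.indicator_of_mem hx]; exact one_ne_zero⟩

/-- If the Zadeh extension on `𝔽₀(X)` is equicontinuous, then `(K(X), T_K)` is
equicontinuous. -/
theorem hyper_equicontinuous_of_zadeh_equicontinuous {X : Type*} [MetricSpace X] [CompactSpace X] [Nontrivial X]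
    (T : X → X) (hT : Continuous T) (hTs : Function.Surjective T)
    (heq : EquicontOn dinf (zadeh T) (F0 X)) :
    EquicontM (hyper T hT) := by
  intro ε hε
  obtain ⟨δ, hδ, H⟩ := heq ε hε
  refine ⟨δ, hδ, fun A B hAB n => ?_⟩
  have := H _ (aux_F0 A) _ (aux_F0 B)
    (by rw [aux_dinf _ _ A.nonempty B.nonempty]; exact hAB) n
  rw [aux_iter T hT hTs, aux_iter T hT hTs,
    aux_dinf _ _ (NonemptyCompacts.nonempty _) (NonemptyCompacts.nonempty _)] at this
  exact this
end

section
/- Let (X, T) be a dynamical system. If the induced hyperspace system (K(X), T_K) is uniformly rigid, then the Zadeh extension system (𝔽₀(X), T_F) with the levelwise metric d_∞ is uniformly rigid. -/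
open Metric Set TopologicalSpace Filter Function
open scoped Classical

variable {X Y : Type*}

/-- Uniform rigidity of a self-map of a metric space. -/
def UnifRigidM {Z : Type*} [PseudoMetricSpace Z] (S : Z → Z) : Prop :=
  ∀ ε > 0, ∃ n : ℕ, 1 ≤ n ∧ ∀ y : Z, dist (S^[n] y) y < ε

/-- Uniform rigidity of `S` restricted to `C`, with respect to the metric `ρ`. -/
def UnifRigidOn (ρ : Y → Y → ℝ) (S : Y → Y) (C : Set Y) : Prop :=
  ∀ ε > 0, ∃ n : ℕ, 1 ≤ n ∧ ∀ A ∈ C, ρ (S^[n] A) A < ε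

lemma cut_zadeh_aux {X : Type*} [MetricSpace X] [CompactSpace X] (T : X → X) (hT : Continuous T)
    (hTs : Function.Surjective T) {A : X → ℝ} (hA : IsFuzzy A) (α : ℝ) :
    cut (zadeh T A) α = T '' cut A α := by
  ext x
  have hc : IsCompact (T ⁻¹' {x}) := (isClosed_singleton.preimage hT).isCompact
  have hne : (T ⁻¹' {x}).Nonempty := hTs x
  have hbdd : BddAbove (A '' (T ⁻¹' {x})) := ⟨1, by rintro _ ⟨y, -, rfl⟩; exact (hA.1 y).2⟩
  constructor
  · intro hx
    obtain ⟨y, hy, hmax⟩ := (hA.2.upperSemicontinuousOn _).exists_isMaxOn hne hc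
    refine ⟨y, ?_, hy⟩
    refine le_trans (show α ≤ sSup (A '' (T ⁻¹' {x})) from hx) (csSup_le (hne.image A) ?_)
    rintro _ ⟨z, hz, rfl⟩
    exact hmax hz
  · rintro ⟨y, hy, rfl⟩
    exact le_trans (show α ≤ A y from hy) (le_csSup hbdd ⟨y, rfl, rfl⟩)

lemma isFuzzy_zadeh_aux {X : Type*} [MetricSpace X] [CompactSpace X] (T : X → X) (hT : Continuous T)
    (hTs : Function.Surjective T) {A : X → ℝ} (hA : IsFuzzy A) : IsFuzzy (zadeh T A) := by
  refine ⟨fun x => ⟨?_, ?_⟩, ?_⟩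
  · apply Real.sSup_nonneg
    rintro _ ⟨y, -, rfl⟩; exact (hA.1 y).1
  · refine csSup_le ((show (T ⁻¹' {x}).Nonempty from hTs x).image A) ?_
    rintro _ ⟨y, -, rfl⟩; exact (hA.1 y).2
  · rw [upperSemicontinuous_iff_isClosed_preimage]
    intro α
    have h := cut_zadeh_aux T hT hTs hA α
    change IsClosed (cut (zadeh T A) α)
    rw [h]
    have : IsClosed (cut A α) := (upperSemicontinuous_iff_isClosed_preimage.1 hA.2) α
    exact (this.isCompact.image hT).isClosed

lemma iter_zadeh_aux {X : Type*} [MetricSpace X] [CompactSpace X] (T : X → X) (hT : Continuous T)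
    (hTs : Function.Surjective T) (n : ℕ) : ∀ {A : X → ℝ}, IsFuzzy A → ∀ α,
    cut ((zadeh T)^[n] A) α = T^[n] '' cut A α := by
  induction n with
  | zero => intro A _ α; simp
  | succ n ih =>
    intro A hA α
    rw [Function.iterate_succ_apply, ih (isFuzzy_zadeh_aux T hT hTs hA), cut_zadeh_aux T hT hTs hA,
      Function.iterate_succ, Set.image_comp]

lemma iter_hyper_aux {X : Type*} [MetricSpace X] (T : X → X) (hT : Continuous T) (n : ℕ) :
    ∀ K : NonemptyCompacts X, (((hyper T hT)^[n] K : NonemptyCompacts X) : Set X) = T^[n] '' K := by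
  induction n with
  | zero => intro K; simp
  | succ n ih =>
    intro K
    rw [Function.iterate_succ_apply, ih, Function.iterate_succ, Set.image_comp]
    rfl

/-- If `(K(X), T_K)` is uniformly rigid, then the Zadeh extension on `𝔽₀(X)` is
uniformly rigid. -/
theorem zadeh_uniformlyRigid_of_hyper_uniformlyRigid {X : Type*} [MetricSpace X] [CompactSpace X] [Nontrivial X]
    (T : X → X) (hT : Continuous T) (hTs : Function.Surjective T)
    (hr : UnifRigidM (hyper T hT)) :
    UnifRigidOn dinf (zadeh T) (F0 X) := by
  intro ε hε
  obtain ⟨n, hn, h⟩ := hr (ε / 2) (half_pos hε)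
  refine ⟨n, hn, fun A hA => ?_⟩
  refine lt_of_le_of_lt (csSup_le ⟨_, 1, ⟨one_pos, le_rfl⟩, rfl⟩ ?_) (half_lt_self hε)
  rintro _ ⟨α, -, rfl⟩
  rw [iter_zadeh_aux T hT hTs n hA.1 α]
  have hcl : IsClosed (cut A α) := (upperSemicontinuous_iff_isClosed_preimage.1 hA.1.2) α
  rcases (cut A α).eq_empty_or_nonempty with he | hne
  · rw [he]
    simp [eHd, (half_pos hε).le]
  · have := h ⟨⟨cut A α, hcl.isCompact⟩, hne⟩
    rw [NonemptyCompacts.dist_eq, iter_hyper_aux] at this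
    rw [eHd, if_pos (Or.inl ⟨hne.image _, hne⟩)]
    exact this.le
end
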